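/- arXiv:1912.03898 — 2 statements merged into one kernel-verified Lean document; each statement's English description precedes it below -/
import Mathlib

section
/- Let J be a polarization of the maximal ideal power M = (x_1,…,x_m)^n, with generator m(b) = m_1(b)⋯m_m(b) corresponding to each b ∈ Δ_m(n), and for each i let X_i(b) ⊆ X̌_i denote the set of variables dividing m_i(b). Then for each i the map X_i : Δ_m(n) → B(X̌_i) is isotone (order-preserving when Δ_m(n) carries the order ≥_i and B(X̌_i) is ordered by inclusion) and rank-preserving (|X_i(b)| = b_i for all b). -/
/-!
The regular-sequence hypothesis is used only through the identity `J ∩ L = J * L`, where `L` is the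
ideal generated by the variable differences (`inf_span_le_mul`); it does not depend on the order
in which the differences are listed.

Fix `i` and `a ∈ Δ_m(n)`. The main claim (`support_subset_of_mem`) is that every monomial
`x^g ∈ J` whose degree in `X̌_p` equals `a_p` for all `p ≠ i` is divisible by every variable of
`m_i(a)`. It is proved by induction on the degree `d` of `x^g` in `X̌_i`. Since `π(J) = (x)^n`,
one has `d ≥ a_i`, so some multiple `x^h` of `m(a)` has the same multidegree as `x^g`, and
`x^h - x^g ∈ J ∩ L = J * L`. Let `φ` (`partFunctional`) be the functional adding up the coefficients
of all monomials which have the same `X̌_i`-part as `x^g` and degree `a_p` in `X̌_p` for `p ≠ i`.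
If the claim failed for `x^g`, then `φ` would vanish on `J * L`: on `x^t (x_{pj} - x_{pj'})` with
`p ≠ i` the two terms cancel, and for `p = i` a nonzero contribution would yield a monomial
`x^t ∈ J` of degree `d - 1` in `X̌_i` whose `X̌_i`-part divides that of `x^g`, so the induction
hypothesis would give the claim. Hence `φ(x^h) = φ(x^g) = 1`, so `x^h` and `x^g` have the same
`X̌_i`-part, which is a multiple of `m_i(a)`.

Isotonicity follows by applying the claim to a multiple of `m(b)` by variables outside `X̌_i`.
-/

open MvPolynomial

noncomputable section

/-- A list of elements is a regular sequence on `A ⧸ J`. -/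
def IsRegSeq {A : Type*} [CommRing A] : List A → Ideal A → Prop
  | [], _ => True
  | a :: l, J => (∀ f, a * f ∈ J → f ∈ J) ∧ IsRegSeq l (J ⊔ Ideal.span {a})

/-- The list of variable differences `x_{i,j} - x_{i,j+1}` for `1 ≤ i ≤ m`, `1 ≤ j ≤ n-1`,
in `k[X̌_1, …, X̌_m]` with `X̌_i = {x_{i1}, …, x_{in}}`. -/
def diffs (k : Type*) [Field k] (m n : ℕ) : List (MvPolynomial (Fin m × Fin n) k) :=
  (List.finRange m).flatMap fun i =>
    (List.finRange (n - 1)).map fun j =>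
      MvPolynomial.X (i, ⟨j.1, by have := j.isLt; omega⟩) -
        MvPolynomial.X (i, ⟨j.1 + 1, by have := j.isLt; omega⟩)

/-- `b + e_i`. -/
def addE {m : ℕ} (b : Fin m → ℕ) (i : Fin m) : Fin m → ℕ :=
  fun t => b t + if t = i then 1 else 0

/-- `c - e_i` (truncated subtraction). -/
def subE {m : ℕ} (c : Fin m → ℕ) (i : Fin m) : Fin m → ℕ :=
  fun t => c t - if t = i then 1 else 0

/-- The monomial `m(b) = m_1(b) ⋯ m_m(b)` with `m_i(b) = ∏_{j ∈ X_i(b)} x_{ij}`, determined by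
the maps `XM i = X_i : Δ_m(n) → B(n)`. -/
def monB (k : Type*) [Field k] {m n : ℕ} (XM : Fin m → (Fin m → ℕ) → Finset (Fin n))
    (b : Fin m → ℕ) : MvPolynomial (Fin m × Fin n) k :=
  ∏ i : Fin m, ∏ j ∈ XM i b, MvPolynomial.X (i, j)

/-- The ideal `J` generated by the monomials `m(b)`, `b ∈ Δ_m(n)`. -/
def JofX (k : Type*) [Field k] {m n : ℕ} (XM : Fin m → (Fin m → ℕ) → Finset (Fin n)) :
    Ideal (MvPolynomial (Fin m × Fin n) k) :=
  Ideal.span { p | ∃ b : Fin m → ℕ, (∑ t, b t) = n ∧ p = monB k XM b }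

/-- `J ⊆ k[X̌_1, …, X̌_m]` is a polarization of `(x_1, …, x_m)^n`: `J` is a squarefree monomial
ideal, the map `π : x_{ij} ↦ x_i` carries `J` onto `(x_1, …, x_m)^n`, and the variable
differences `x_{i,j} - x_{i,j+1}` form a regular sequence on the quotient by `J`. -/
def IsPolarizationMaxPow (k : Type*) [Field k] {m n : ℕ}
    (J : Ideal (MvPolynomial (Fin m × Fin n) k)) : Prop :=
  (∃ G : Set ((Fin m × Fin n) →₀ ℕ), (∀ d ∈ G, ∀ x, d x ≤ 1) ∧
    J = Ideal.span ((fun d => monomial d (1 : k)) '' G)) ∧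
  Ideal.map (rename Prod.fst : MvPolynomial (Fin m × Fin n) k →ₐ[k] MvPolynomial (Fin m) k) J
    = Ideal.span (Set.range MvPolynomial.X) ^ n ∧
  IsRegSeq (diffs k m n) J

/-- The edge `(c; i, j)` of `Δ_m(n)` (where `c ∈ Δ_m(n+1)` and `i, j ∈ supp c`) is a
linear syzygy edge: `X_p(c - e_i) = X_p(c - e_j)` for every `p ∈ supp(c) \ {i, j}`. -/
def LSedge {m n : ℕ} (XM : Fin m → (Fin m → ℕ) → Finset (Fin n))
    (c : Fin m → ℕ) (i j : Fin m) : Prop :=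
  ∀ p, 1 ≤ c p → p ≠ i → p ≠ j → XM p (subE c i) = XM p (subE c j)

/-- The monomial `x^d` is a minimal generator of the monomial ideal `I`. -/
def IsMinGen {k : Type*} [Field k] {σ : Type*} (I : Ideal (MvPolynomial σ k))
    (d : σ →₀ ℕ) : Prop :=
  monomial d (1 : k) ∈ I ∧ ∀ d' : σ →₀ ℕ, d' ≤ d → d' ≠ d → monomial d' (1 : k) ∉ I

/-- If `l` is a regular sequence on `A ⧸ J`, then `Tor_1(A ⧸ J, A ⧸ (l))` vanishes, in the form
`J ∩ (l) ⊆ J * (l)`. -/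
lemma inf_span_le_mul {A : Type*} [CommRing A] (l : List A) :
    ∀ J : Ideal A, IsRegSeq l J →
      J ⊓ Ideal.span {x | x ∈ l} ≤ J * Ideal.span {x | x ∈ l} := by
  induction l with
  | nil => intro J _; simp
  | cons a l ih =>
    intro J h x hx
    obtain ⟨h1, h2⟩ := h
    obtain ⟨hxJ, hxL⟩ := hx
    have hset : {x : A | x ∈ a :: l} = insert a {x : A | x ∈ l} := by ext; simp
    rw [hset] at hxL ⊢
    obtain ⟨r, y, hy, hxy⟩ := Ideal.mem_span_insert.1 hxL
    have hyJ : y ∈ J ⊔ Ideal.span {a} := by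
      have : y = x + (-r) * a := by rw [hxy]; ring
      rw [this]
      exact add_mem (Ideal.mem_sup_left hxJ)
        (Ideal.mem_sup_right (Ideal.mul_mem_left _ _ (Ideal.mem_span_singleton_self a)))
    have hy2 := ih _ h2 ⟨hyJ, hy⟩
    rw [Ideal.sup_mul] at hy2
    obtain ⟨yJL, hyJL, z, hz, hyz⟩ := Submodule.mem_sup.1 hy2
    obtain ⟨s, _, hsz⟩ := Ideal.mem_span_singleton_mul.1 hz
    have hrs : r + s ∈ J := by
      apply h1
      have : a * (r + s) = x - yJL := by rw [hxy, ← hyz, ← hsz]; ring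
      rw [this]
      have hle : J * Ideal.span {x | x ∈ l} ≤ J := Ideal.mul_le_left
      exact sub_mem hxJ (hle hyJL)
    have hx' : x = (r + s) * a + yJL := by rw [hxy, ← hyz, ← hsz]; ring
    rw [hx']
    refine add_mem (Ideal.mul_mem_mul hrs (Ideal.subset_span (by simp))) ?_
    have hle : J * Ideal.span {x | x ∈ l} ≤ J * Ideal.span (insert a {x | x ∈ l}) :=
      Ideal.mul_mono_right (Ideal.span_mono (Set.subset_insert _ _))
    exact hle hyJL

/-- The degree of `x^h` in the variables `X̌_p`. -/
def blockDeg {m n : ℕ} (h : (Fin m × Fin n) →₀ ℕ) (p : Fin m) : ℕ := ∑ j, h (p, j)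

lemma blockDeg_add {m n : ℕ} (g h : (Fin m × Fin n) →₀ ℕ) (p : Fin m) :
    blockDeg (g + h) p = blockDeg g p + blockDeg h p := by
  simp [blockDeg, Finset.sum_add_distrib]

lemma blockDeg_single {m n : ℕ} (q p : Fin m) (j : Fin n) (c : ℕ) :
    blockDeg (Finsupp.single (q, j) c) p = if q = p then c else 0 := by
  classical
  by_cases h : q = p
  · subst h
    simp [blockDeg, Finsupp.single_apply]
  · simp [blockDeg, h]

/-- The ideal generated by the variable differences. -/
def diffIdeal (k : Type*) [Field k] (m n : ℕ) : Ideal (MvPolynomial (Fin m × Fin n) k) :=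
  Ideal.span {x | x ∈ diffs k m n}

/-- The shape of a variable difference: both variables lie in the same block. -/
lemma exists_of_mem_diffs {k : Type*} [Field k] {m n : ℕ} {x : MvPolynomial (Fin m × Fin n) k}
    (hx : x ∈ diffs k m n) : ∃ (p : Fin m) (j j' : Fin n), x = X (p, j) - X (p, j') := by
  simp only [diffs, List.mem_flatMap, List.mem_map] at hx
  obtain ⟨p, _, j, _, rfl⟩ := hx
  exact ⟨p, _, _, rfl⟩

/-- Modulo the differences, all variables of a block agree with the first one. -/
lemma mk_X_eq {k : Type*} [Field k] {m n : ℕ} (hn : 0 < n) (p : Fin m) :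
    ∀ (j : ℕ) (hj : j < n),
    Ideal.Quotient.mk (diffIdeal k m n) (X (p, ⟨j, hj⟩)) =
      Ideal.Quotient.mk (diffIdeal k m n) (X (p, ⟨0, hn⟩)) := by
  intro j
  induction j with
  | zero => intro _; rfl
  | succ j ih =>
    intro hj
    rw [← ih (by omega), eq_comm, Ideal.Quotient.eq]
    apply Ideal.subset_span
    simp only [diffs, Set.mem_ofPred_eq, List.mem_flatMap, List.mem_map]
    exact ⟨p, List.mem_finRange _, ⟨j, by omega⟩, List.mem_finRange _, rfl⟩

lemma monomial_sub_mem_diffIdeal {k : Type*} [Field k] {m n : ℕ} (hn : 0 < n)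
    (g h : (Fin m × Fin n) →₀ ℕ) (hgh : ∀ p, blockDeg g p = blockDeg h p) :
    monomial g (1 : k) - monomial h 1 ∈ diffIdeal k m n := by
  have key : ∀ f : (Fin m × Fin n) →₀ ℕ,
      Ideal.Quotient.mk (diffIdeal k m n) (monomial f (1 : k)) =
        ∏ p, Ideal.Quotient.mk (diffIdeal k m n) (X (p, ⟨0, hn⟩)) ^ blockDeg f p := by
    intro f
    rw [monomial_eq, Finsupp.prod_fintype _ _ (by simp), map_one, one_mul, map_prod,
      Fintype.prod_prod_type]
    refine Finset.prod_congr rfl fun p _ => ?_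
    rw [blockDeg, ← Finset.prod_pow_eq_pow_sum]
    refine Finset.prod_congr rfl fun j _ => ?_
    rw [map_pow, mk_X_eq hn p j.1 j.2]
  rw [← Ideal.Quotient.eq, key, key]
  simp [hgh]

/-- Every monomial in `J` has degree at least `n`, because `π(J) = (x_1, …, x_m)^n`. -/
lemma le_sum_blockDeg {k : Type*} [Field k] {m n : ℕ}
    {J : Ideal (MvPolynomial (Fin m × Fin n) k)} (hpol : IsPolarizationMaxPow k J)
    {g : (Fin m × Fin n) →₀ ℕ} (hg : monomial g (1 : k) ∈ J) : n ≤ ∑ p, blockDeg g p := by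
  have h1 := Ideal.mem_map_of_mem
    (rename Prod.fst : MvPolynomial (Fin m × Fin n) k →ₐ[k] MvPolynomial (Fin m) k) hg
  rw [hpol.2.1, rename_monomial] at h1
  have h2 := (monomial_mem_pow_idealOfVars_iff n _ (one_ne_zero (α := k))).1 h1
  rw [Finsupp.degree_mapDomain, Finsupp.degree_eq_sum, Fintype.sum_prod_type] at h2
  exact h2

/-- The linear functional adding up the coefficients of all monomials `x^h` with the same
`X̌_i`-part as `x^g` and the same degree as `x^g` in every block `X̌_p`. -/
def partFunctional (k : Type*) [Field k] {m n : ℕ} (i : Fin m) (g : (Fin m × Fin n) →₀ ℕ) :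
    MvPolynomial (Fin m × Fin n) k →ₗ[k] k :=
  open Classical in
  (basisMonomials (Fin m × Fin n) k).constr k (fun h : (Fin m × Fin n) →₀ ℕ =>
    if (∀ j, h (i, j) = g (i, j)) ∧ ∀ p, blockDeg h p = blockDeg g p then 1 else 0)

open Classical in
lemma partFunctional_monomial {k : Type*} [Field k] {m n : ℕ} (i : Fin m)
    (g h : (Fin m × Fin n) →₀ ℕ) (c : k) :
    partFunctional k i g (monomial h c) =
      if (∀ j, h (i, j) = g (i, j)) ∧ ∀ p, blockDeg h p = blockDeg g p then c else 0 := by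
  have h1 : monomial h c = c • basisMonomials (Fin m × Fin n) k h := by
    simp [smul_monomial]
  rw [h1, map_smul, partFunctional, Module.Basis.constr_basis]
  simp

/-- Applied to `x^a = m(a)`: a monomial of `J` whose degree in `X̌_p` is `a_p` for all `p ≠ i` is
divisible by every variable of `m_i(a)`. -/
lemma support_subset_of_mem {k : Type*} [Field k] {m n : ℕ}
    {J : Ideal (MvPolynomial (Fin m × Fin n) k)} (hpol : IsPolarizationMaxPow k J)
    (i : Fin m) (a : (Fin m × Fin n) →₀ ℕ) (ha : monomial a (1 : k) ∈ J)
    (hadeg : ∑ p, blockDeg a p = n) (d : ℕ) :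
    ∀ g : (Fin m × Fin n) →₀ ℕ, monomial g (1 : k) ∈ J → blockDeg g i = d →
      (∀ p, p ≠ i → blockDeg g p = blockDeg a p) →
      ∀ j, 1 ≤ a (i, j) → 1 ≤ g (i, j) := by
  classical
  induction d using Nat.strong_induction_on with
  | _ d ih =>
  intro g hg hgd hgp j haj
  by_contra hbad
  have hn : 0 < n := j.pos
  have hle : blockDeg a i ≤ blockDeg g i := by
    have h1 := hadeg.trans_le (le_sum_blockDeg hpol hg)
    rw [← Finset.add_sum_erase _ (blockDeg a) (Finset.mem_univ i),
      ← Finset.add_sum_erase _ (blockDeg g) (Finset.mem_univ i),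
      Finset.sum_congr rfl (fun p hp => hgp p (Finset.ne_of_mem_erase hp))] at h1
    exact le_of_add_le_add_right h1
  -- A multiple of `x^a` with the multidegree of `x^g`.
  set h := a + Finsupp.single (i, j) (blockDeg g i - blockDeg a i) with hh
  have hhJ : monomial h (1 : k) ∈ J := by
    have := J.mul_mem_right (monomial (Finsupp.single (i, j) (blockDeg g i - blockDeg a i)) 1) ha
    rwa [monomial_mul, one_mul] at this
  have hhg : ∀ p, blockDeg h p = blockDeg g p := by
    intro p
    rw [hh, blockDeg_add, blockDeg_single]
    by_cases hp : i = p
    · subst hp; simp; omega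
    · simp [hp, hgp p (Ne.symm hp)]
  have hmem : monomial h (1 : k) - monomial g 1 ∈ J * diffIdeal k m n :=
    inf_span_le_mul _ J hpol.2.2 ⟨sub_mem hhJ hg, monomial_sub_mem_diffIdeal hn _ _ hhg⟩
  -- Contributions from differences in the block `X̌_i` are excluded by the induction hypothesis.
  have hno : ∀ t : (Fin m × Fin n) →₀ ℕ, monomial t (1 : k) ∈ J → ∀ j₁ : Fin n,
      ¬ ((∀ j, (t + Finsupp.single (i, j₁) 1 : (Fin m × Fin n) →₀ ℕ) (i, j) = g (i, j)) ∧
        ∀ p, blockDeg (t + Finsupp.single (i, j₁) 1) p = blockDeg g p) := by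
    rintro t ht j₁ ⟨ht1, ht2⟩
    simp only [blockDeg_add, blockDeg_single] at ht2
    have h3 := ih (blockDeg t i) (by have := ht2 i; simp at this; omega) t ht rfl
      (fun p hp => by have := ht2 p; simp [Ne.symm hp] at this; rw [this, hgp p hp]) j haj
    have := ht1 j
    rw [Finsupp.add_apply] at this
    omega
  have hzero : ∀ (t : (Fin m × Fin n) →₀ ℕ) (c : k), monomial t (1 : k) ∈ J →
      ∀ (p : Fin m) (j₁ j₂ : Fin n),
      partFunctional k i g (monomial t c * (X (p, j₁) - X (p, j₂))) = 0 := by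
    intro t c ht p j₁ j₂
    rw [mul_sub, X, X, monomial_mul, monomial_mul, mul_one, map_sub,
      partFunctional_monomial, partFunctional_monomial]
    by_cases hp : p = i
    · subst hp
      rw [if_neg (hno t ht j₁), if_neg (hno t ht j₂), sub_zero]
    · have hpj : ∀ (j₀ j : Fin n), ¬ ((p, j₀) = (i, j)) := by simp [hp]
      simp only [blockDeg_add, blockDeg_single, Finsupp.add_apply, Finsupp.single_apply, hpj,
        if_false, sub_self]
  have hker : ∀ x ∈ J * diffIdeal k m n, partFunctional k i g x = 0 := by
    obtain ⟨G, -, hG⟩ := hpol.1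
    intro x hx
    have hGJ : ∀ t ∈ G, monomial t (1 : k) ∈ J := fun t ht => by
      rw [hG]; exact Ideal.subset_span ⟨t, ht, rfl⟩
    rw [hG, diffIdeal, Ideal.span_mul_span'] at hx
    refine Submodule.span_induction
      (p := fun x _ => ∀ q, partFunctional k i g (q * x) = 0) ?_ ?_ ?_ ?_ hx 1 |> fun h => by
        simpa using h
    · rintro _ ⟨_, ⟨t, ht, rfl⟩, y, hy, rfl⟩ q
      obtain ⟨p, j₁, j₂, rfl⟩ := exists_of_mem_diffs hy
      induction q using MvPolynomial.induction_on' with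
      | monomial u c =>
        have := hzero (u + t) c (by
          have := J.mul_mem_left (monomial u 1) (hGJ t ht)
          rwa [monomial_mul, one_mul] at this) p j₁ j₂
        simpa [← mul_assoc, monomial_mul] using this
      | add p q hp hq => rw [add_mul, map_add, hp, hq, add_zero]
    · simp
    · intro x y _ _ hx hy q
      rw [mul_add, map_add, hx, hy, add_zero]
    · intro r x _ hx q
      rw [smul_eq_mul, ← mul_assoc]
      exact hx _
  have hφ := hker _ hmem
  rw [map_sub, partFunctional_monomial, partFunctional_monomial,
    if_pos (⟨fun _ => rfl, fun _ => rfl⟩ :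
      (∀ j, g (i, j) = g (i, j)) ∧ ∀ p, blockDeg g p = blockDeg g p)] at hφ
  split_ifs at hφ with hc
  · have := hc.1 j
    rw [hh, Finsupp.add_apply] at this
    omega
  · simp at hφ

/-- Let `J` be a polarization of `(x_1, …, x_m)^n`, with minimal generator
`m(b)` (of exponent vector `D b`, squarefree, with `m_i(b)` of degree `b_i` in the variables
`X̌_i`) corresponding to each `b ∈ Δ_m(n)`, and let `X_i(b) ⊆ X̌_i` be the set of variables
dividing `m_i(b)`.  Then each map `X_i : Δ_m(n) → B(X̌_i)` is rank-preserving
(`|X_i(b)| = b_i`) and isotone for the partial order `≥_i` on `Δ_m(n)`. -/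
theorem stmt_3 {k : Type*} [Field k] {m n : ℕ}
    (J : Ideal (MvPolynomial (Fin m × Fin n) k))
    (hpol : IsPolarizationMaxPow k J)
    (D : (Fin m → ℕ) → ((Fin m × Fin n) →₀ ℕ))
    (hmin : ∀ b : Fin m → ℕ, (∑ t, b t) = n → IsMinGen J (D b))
    (hsq : ∀ b : Fin m → ℕ, (∑ t, b t) = n → ∀ x, D b x ≤ 1)
    (hdeg : ∀ b : Fin m → ℕ, (∑ t, b t) = n → ∀ i : Fin m, ∑ j : Fin n, D b (i, j) = b i) :
    (∀ (i : Fin m) (b : Fin m → ℕ), (∑ t, b t) = n →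
      (Finset.univ.filter fun j : Fin n => 1 ≤ D b (i, j)).card = b i) ∧
    (∀ (i : Fin m) (a b : Fin m → ℕ), (∑ t, a t) = n → (∑ t, b t) = n →
      a i ≤ b i → (∀ j, j ≠ i → b j ≤ a j) →
      {j : Fin n | 1 ≤ D a (i, j)} ⊆ {j : Fin n | 1 ≤ D b (i, j)}) := by
  constructor
  · intro i b hb
    rw [← hdeg b hb i, Finset.card_filter]
    refine Finset.sum_congr rfl fun j _ => ?_
    have := hsq b hb (i, j)
    split_ifs <;> omega
  · intro i a b ha hb hi hle j haj
    have hn : 0 < n := j.pos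
    have hdega : ∀ p, blockDeg (D a) p = a p := hdeg a ha
    have hdegb : ∀ p, blockDeg (D b) p = b p := hdeg b hb
    -- The multiple of `m(b)` by variables outside `X̌_i` having degree `a_p` in `X̌_p`, `p ≠ i`.
    let v : (Fin m × Fin n) →₀ ℕ :=
      ∑ p, Finsupp.single (p, j) (if p = i then 0 else a p - b p)
    have hvi : ∀ j', v (i, j') = 0 := by
      intro j'
      simp only [v, Finsupp.finsetSum_apply]
      refine Finset.sum_eq_zero fun p _ => ?_
      by_cases hp : p = i <;> simp [hp]
    have hvp : ∀ p, p ≠ i → blockDeg v p = a p - b p := by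
      intro p hp
      have : blockDeg v p = ∑ q, blockDeg
          (Finsupp.single (q, j) (if q = i then 0 else a q - b q)) p := by
        simp only [blockDeg, v, Finsupp.finsetSum_apply]
        exact Finset.sum_comm
      simp [this, blockDeg_single, hp]
    have hg : monomial (D b + v) (1 : k) ∈ J := by
      have := J.mul_mem_right (monomial v 1) (hmin b hb).1
      rwa [monomial_mul, one_mul] at this
    have := support_subset_of_mem hpol i (D a) (hmin a ha).1 (by simp [hdega, ha]) _
      (D b + v) hg rfl (fun p hp => by
        have := hle p hp
        rw [blockDeg_add, hdega, hdegb, hvp p hp]; omega) j haj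
    rw [Finsupp.add_apply, hvi, add_zero] at this
    exact this
end
end

section
/- Let m = 3 and let X_1, X_2, X_3 be rank-preserving isotone maps from Δ_3(n) to B(n), with associated ideal J. Then J is a polarization of (x_1,x_2,x_3)^n if and only if for every c ∈ Δ_3(n+1) whose support has cardinality 3 (i.e., every down-triangle D(c)), at most one of the three edges of D(c) fails to be a linear syzygy edge. -/
/-!
The generators of `J` are squarefree monomials of degree `n` and `x_{ij} ↦ x_i` carries `m(b)` to
`x^b`, so everything rests on when the variable differences form a regular sequence.

*Merging variables.* After some variables have been identified along a map `h`, the ideal generated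
by `J` and the corresponding differences is the preimage `JJ` of the monomial ideal generated by the
merged generators (`JJ_sup`). The next difference `x - y` involves a variable `y` which has not been
merged yet, so the merged generators are squarefree in `y`, and then `x - y` is regular if and only
if `w x ∈ J` and `w y ∈ J` imply `w ∈ J` for every monomial `w` (`regular_iff`, condition `CC`).
Hence the sequence is regular if and only if `CC` holds at every stage (`isRegSeq_iff`).

*The down-triangle condition is sufficient.* Under this condition, every region of `Δ_3(n)` of the
form `{c : X_i(c) ∈ U_i for all i}`, with each `U_i` closed under passing to subsets, is connected
through steps along which the sets are comparable in each color (`conn`). The proof is by induction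
on the distance of two points: one of them moves towards the other along a linear syzygy edge, or
both lie in one row; then either the path is cut at a neighbour inside the region, or it passes
through the next row by means of the third vertices of the down-triangles at both ends
(`third_vertex`). Suppose now that `w x` and `w y` are divisible by merged generators `m(a)` and
`m(b)` but `w` is not in the ideal. Then `y ∤ w`; join `a` and `b` in the region where the joint
degree in `x` and `y` is at most one more than in `w`. In this region, absence of `y` forces the
maximal degree in `x`, and a step between comparable sets cannot trade one `x` for a `y`. So `y`
is absent at `b` as well, which contradicts the bound on the degree of `m(b)` in `x` (`CC_of_tri`).

*The down-triangle condition is necessary.* After all merges every edge is a linear syzygy edge. If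
merging `x` and `y` turns the edge of `D(c)` opposite to `c - e_i` into a linear syzygy edge, let
`w` be the monomial with color-`i` part that of `c - e_i`, color-`j` part that of `c - e_k` and
color-`k` part that of `c - e_j`. Then `w x` and `w y` are in the ideal, so `w` is by `CC`, and
comparing degrees `w` is the merged `m(c - e_i)`; therefore the other two edges were linear syzygy
edges already (`edge_of_CC`). Undoing the merges one at a time, at most one edge of `D(c)` fails at
each stage (`triAt_of_CSeq`), in particular before any merging.
-/

open MvPolynomial

noncomputable section

/-! ### Regularity modulo merged monomial ideals -/

section Algebra

variable {σ ι : Type*}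

/-- `w` lies in the monomial ideal generated by the images under `h` of the monomials with
exponents `E b`. -/
def InI (E : ι → σ →₀ ℕ) (h : σ → σ) (w : σ →₀ ℕ) : Prop :=
  ∃ b, (E b).mapDomain h ≤ w

/-- The preimage under the substitution `X v ↦ X (h v)` of the monomial ideal generated by the
images of the monomials with exponents `E b`. -/
def JJ (k : Type*) [Field k] (E : ι → σ →₀ ℕ) (h : σ → σ) : Ideal (MvPolynomial σ k) :=
  (Ideal.span ((fun d => monomial d (1 : k)) '' Set.range fun b => (E b).mapDomain h)).comap
    (rename h : MvPolynomial σ k →ₐ[k] MvPolynomial σ k)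

variable {k : Type*} [Field k] {E : ι → σ →₀ ℕ} {h : σ → σ}

lemma InI.mono {w w' : σ →₀ ℕ} (hw : InI E h w) (hle : w ≤ w') : InI E h w' :=
  let ⟨b, hb⟩ := hw; ⟨b, hb.trans hle⟩

/-- A polynomial lies in `JJ k E h` if and only if all monomials of its image under `X v ↦ X (h v)`
are divisible by a merged generator. -/
lemma mem_JJ {p : MvPolynomial σ k} :
    p ∈ JJ k E h ↔ ∀ w, coeff w (rename h p) ≠ 0 → InI E h w := by
  unfold JJ InI
  rw [Ideal.mem_comap, mem_ideal_span_monomial_image]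
  simp

variable [DecidableEq σ]

/-- Having merged variables along `h`, also merge the class of `p.2` (assumed to be the single
variable `p.2`) into the class of `p.1`. -/
def mstep (h : σ → σ) (p : σ × σ) : σ → σ :=
  fun v => if h v = p.2 then h p.1 else h v

/-- The combinatorial form of regularity of `X p.1 - X p.2` modulo `JJ k E h`. -/
def CC (E : ι → σ →₀ ℕ) (h : σ → σ) (p : σ × σ) : Prop :=
  ∀ u : σ →₀ ℕ, InI E h (u.mapDomain h + Finsupp.single (h p.1) 1) →
    InI E h (u.mapDomain h + Finsupp.single p.2 1) → InI E h (u.mapDomain h)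

/-- The variable `y` has not been merged with any other variable by `h`. -/
def Fresh (h : σ → σ) (y : σ) : Prop := h y = y ∧ ∀ v, h v = y → v = y

lemma Fresh.mapDomain_apply {y : σ} (hy : Fresh h y) (u : σ →₀ ℕ) : u.mapDomain h y = u y := by
  classical
  rw [Finsupp.mapDomain, Finsupp.sum_apply, Finsupp.sum, Finset.sum_eq_single y]
  · simp [hy.1]
  · intro b _ hb
    rw [Finsupp.single_apply, if_neg]
    exact fun hh => hb (hy.2 b hh)
  · intro hh
    simp [hy.1, Finsupp.notMem_support_iff.1 hh]

/-- `x - y` is regular modulo a monomial ideal whose generators are squarefree in `y` if and only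
if `w x, w y ∈ J` implies `w ∈ J` for all monomials `w`. -/
lemma regular_iff (hE : ∀ b v, E b v ≤ 1) (p : σ × σ) (hp : p.1 ≠ p.2) (hf : Fresh h p.2) :
    (∀ f : MvPolynomial σ k, (X p.1 - X p.2) * f ∈ JJ k E h → f ∈ JJ k E h) ↔ CC E h p := by
  obtain ⟨s, y⟩ := p
  simp only at hp hf ⊢
  have hxy : h s ≠ y := fun hh => hp (hf.2 _ hh)
  constructor
  · intro H u h1 h2
    have h3 : (monomial u (1 : k)) ∈ JJ k E h := by
      apply H
      rw [mem_JJ]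
      intro w hw
      rw [map_mul, map_sub, rename_X, rename_X, rename_monomial, hf.1, sub_mul, X, X,
        monomial_mul, monomial_mul, coeff_sub, coeff_monomial, coeff_monomial] at hw
      by_cases e1 : Finsupp.single (h s) 1 + Finsupp.mapDomain h u = w
      · rw [← e1, add_comm]; exact h1
      · by_cases e2 : Finsupp.single y 1 + Finsupp.mapDomain h u = w
        · rw [← e2, add_comm]; exact h2
        · simp [e1, e2] at hw
    rw [mem_JJ] at h3
    apply h3
    rw [rename_monomial, coeff_monomial]
    simp
  · intro H f hfm
    rw [mem_JJ] at hfm ⊢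
    set q := rename h f with hq
    simp only [map_mul, map_sub, rename_X, hf.1, ← hq] at hfm
    -- vanishing of the coefficient of `(x - y) q` at a monomial outside the ideal
    have key : ∀ w, ¬ InI E h w →
        (if w (h s) = 0 then 0 else coeff (w - Finsupp.single (h s) 1) q) =
        (if w y = 0 then 0 else coeff (w - Finsupp.single y 1) q) := by
      intro w hw
      by_contra hne
      apply hw
      apply hfm
      rw [sub_mul, coeff_sub, coeff_X_mul', coeff_X_mul', sub_ne_zero]
      simpa using hne
    have hsq : ∀ w, 1 ≤ w y → ¬ InI E h w → ¬ InI E h (w + Finsupp.single y 1) := by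
      rintro w h1 h2 ⟨b, hb⟩
      apply h2
      refine ⟨b, fun v => ?_⟩
      have := hb v
      by_cases hv : v = y
      · subst hv
        rw [hf.mapDomain_apply]
        exact (hE b v).trans h1
      · simpa [Finsupp.single_apply, Ne.symm hv] using this
    -- a monomial containing `y` and lying outside the ideal does not occur in `q`
    have hy : ∀ N : ℕ, ∀ w, w (h s) = N → 1 ≤ w y → ¬ InI E h w → coeff w q = 0 := by
      intro N
      induction N with
      | zero =>
        intro w h0 h1 h2
        have h3 := hsq w h1 h2
        have := key _ h3
        simp [h0, hxy.symm] at this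
        exact this.symm
      | succ N ih =>
        intro w h0 h1 h2
        have h3 := hsq w h1 h2
        have := key _ h3
        simp [h0, hxy.symm] at this
        rw [← this]
        apply ih
        · simp [h0, hxy.symm]
        · simp [hxy]
        · exact fun hh => h3 (hh.mono tsub_le_self)
    intro w hw
    by_contra hn
    have hwy : w y = 0 := by
      by_contra h0
      exact hw (hy _ w rfl (Nat.one_le_iff_ne_zero.2 h0) hn)
    obtain ⟨u, rfl, -⟩ := coeff_rename_ne_zero _ _ _ hw
    set w := Finsupp.mapDomain h u
    apply hn
    apply H
    · by_contra h3
      have hwy' : (w + Finsupp.single (h s) 1 : σ →₀ ℕ) y = 0 := by simp [hwy, hxy]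
      have := (key _ h3).trans (if_pos hwy')
      simp at this
      exact hw this
    · by_contra h3
      have := key _ h3
      simp [hxy.symm] at this
      split_ifs at this with h5
      · exact hw this.symm
      · apply hw
        rw [← this]
        apply hy _ _ rfl
        · simp [hxy]
        · exact fun hh => h3 (hh.mono tsub_le_self)

lemma mstep_idem (hi : ∀ v, h (h v) = h v) (p : σ × σ) (hp : p.1 ≠ p.2) (hf : Fresh h p.2)
    (v : σ) : mstep h p (mstep h p v) = mstep h p v := by
  have hxy : h p.1 ≠ p.2 := fun hh => hp (hf.2 _ hh)
  unfold mstep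
  by_cases h1 : h v = p.2
  · simp [h1, hi, hxy]
  · simp [h1, hi]

lemma mstep_fresh {p : σ × σ} {y : σ} (hy : Fresh h y) (h1 : y ≠ p.1)
    (h2 : y ≠ p.2) : Fresh (mstep h p) y := by
  constructor
  · simp [mstep, hy.1, h2]
  · intro v hv
    unfold mstep at hv
    split_ifs at hv with h3
    · exact absurd (hy.2 _ hv).symm h1
    · exact hy.2 _ hv

/-- Adjoining the next variable difference amounts to merging the next pair of variables. -/
lemma JJ_sup (hi : ∀ v, h (h v) = h v) (p : σ × σ) (hp : p.1 ≠ p.2) (hf : Fresh h p.2) :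
    JJ k E h ⊔ Ideal.span {(X p.1 - X p.2 : MvPolynomial σ k)} = JJ k E (mstep h p) := by
  have hxy : h p.1 ≠ p.2 := fun hh => hp (hf.2 _ hh)
  apply le_antisymm
  · rw [sup_le_iff]
    constructor
    · intro f hfm
      rw [mem_JJ] at hfm ⊢
      intro w hw
      have e1 : mstep h p = (fun v => if v = p.2 then h p.1 else v) ∘ h := by
        funext v; simp [mstep]
      rw [e1, ← rename_rename] at hw
      obtain ⟨u, hu, hu2⟩ := coeff_rename_ne_zero _ _ _ hw
      obtain ⟨b, hb⟩ := hfm u hu2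
      refine ⟨b, ?_⟩
      rw [e1, Finsupp.mapDomain_comp, ← hu]
      exact Finsupp.mapDomain_mono hb
    · rw [Ideal.span_le, Set.singleton_subset_iff]
      change _ ∈ JJ k E _
      rw [mem_JJ]
      intro w hw
      exfalso; apply hw
      simp [mstep, hf.1, hxy]
  · set I := JJ k E h ⊔ Ideal.span {(X p.1 - X p.2 : MvPolynomial σ k)} with hI
    have hX0 : ∀ v, (X v - X (h v) : MvPolynomial σ k) ∈ I := by
      intro v
      apply Ideal.mem_sup_left
      rw [mem_JJ]
      intro w hw
      exfalso; apply hw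
      simp [hi]
    have hX : ∀ v, (X v - X (mstep h p v) : MvPolynomial σ k) ∈ I := by
      intro v
      unfold mstep
      split_ifs with h1
      · have h2 := hX0 v
        have h3 := hX0 p.1
        have h4 : (X p.1 - X p.2 : MvPolynomial σ k) ∈ I :=
          Ideal.mem_sup_right (Ideal.subset_span rfl)
        rw [h1] at h2
        have := I.add_mem (I.sub_mem h2 h4) h3
        convert this using 1
        ring
      · exact hX0 v
    -- modulo `I` a polynomial agrees with its merged version
    have hcong : ∀ f : MvPolynomial σ k, f - rename (mstep h p) f ∈ I := by
      intro f
      rw [← Ideal.Quotient.eq]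
      have : (Ideal.Quotient.mkₐ k I) = (Ideal.Quotient.mkₐ k I).comp (rename (mstep h p)) := by
        apply MvPolynomial.algHom_ext
        intro v
        simpa [Ideal.Quotient.eq] using hX v
      exact DFunLike.congr_fun this f
    intro f hfm
    have h1 : rename (mstep h p) f ∈ I := by
      have h2 : rename (mstep h p) f ∈ Ideal.span _ := hfm
      refine Ideal.span_le.2 ?_ h2
      rintro _ ⟨_, ⟨b, rfl⟩, rfl⟩
      have h3 := hcong (monomial (E b) 1)
      have h4 : (monomial (E b) (1 : k)) ∈ I := by
        apply Ideal.mem_sup_left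
        rw [mem_JJ]
        intro w hw
        rw [rename_monomial, coeff_monomial] at hw
        refine ⟨b, le_of_eq ?_⟩
        by_contra hne
        exact hw (if_neg hne)
      have := I.sub_mem h4 h3
      simpa [rename_monomial] using this
    simpa using I.add_mem (hcong f) h1

/-- The conditions `CC` at all stages of merging the pairs of a list. -/
def CSeq (E : ι → σ →₀ ℕ) : List (σ × σ) → (σ → σ) → Prop
  | [], _ => True
  | p :: L, h => CC E h p ∧ CSeq E L (mstep h p)

/-- Merge all pairs of a list successively. -/
def mfold : List (σ × σ) → (σ → σ) → (σ → σ)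
  | [], h => h
  | p :: L, h => mfold L (mstep h p)

/-- The pairs of `L` can be merged one after the other, each time adding a single so far unmerged
variable to a class. -/
def GoodL (L : List (σ × σ)) (h : σ → σ) : Prop :=
  (∀ p ∈ L, p.1 ≠ p.2 ∧ Fresh h p.2) ∧ L.Pairwise fun p q => q.2 ≠ p.1 ∧ q.2 ≠ p.2

lemma GoodL.tail {p : σ × σ} {L : List (σ × σ)} (hL : GoodL (p :: L) h) :
    GoodL L (mstep h p) := by
  obtain ⟨h1, h2⟩ := hL
  rw [List.pairwise_cons] at h2
  refine ⟨fun q hq => ⟨(h1 q (List.mem_cons_of_mem _ hq)).1, ?_⟩, h2.2⟩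
  exact mstep_fresh (h1 q (List.mem_cons_of_mem _ hq)).2
    (h2.1 q hq).1 (h2.1 q hq).2

/-- The variable differences form a regular sequence exactly when `CC` holds at each stage of the
merging process, by `regular_iff` and `JJ_sup`. -/
lemma isRegSeq_iff (hE : ∀ b v, E b v ≤ 1) (L : List (σ × σ)) (h : σ → σ)
    (hi : ∀ v, h (h v) = h v) (hL : GoodL L h) :
    IsRegSeq (L.map fun p => (X p.1 - X p.2 : MvPolynomial σ k)) (JJ k E h) ↔ CSeq E L h := by
  induction L generalizing h with
  | nil => simp [IsRegSeq, CSeq]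
  | cons p L ih =>
    have h1 := hL.1 p List.mem_cons_self
    rw [List.map_cons, IsRegSeq, CSeq, regular_iff hE p h1.1 h1.2, JJ_sup hi p h1.1 h1.2,
      ih _ (mstep_idem hi p h1.1 h1.2) hL.tail]

lemma mfold_congr (L : List (σ × σ)) (h : σ → σ) {v w : σ} (hvw : h v = h w) :
    mfold L h v = mfold L h w := by
  induction L generalizing h with
  | nil => exact hvw
  | cons p L ih => exact ih _ (by simp [mstep, hvw])

lemma mfold_pair (L : List (σ × σ)) (h : σ → σ) (hL : GoodL L h) {p : σ × σ} (hp : p ∈ L) :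
    mfold L h p.1 = mfold L h p.2 := by
  induction L generalizing h with
  | nil => simp at hp
  | cons q L ih =>
    rcases List.mem_cons.1 hp with rfl | hp
    · have h1 := hL.1 p List.mem_cons_self
      refine mfold_congr L (mstep h p) ?_
      simp [mstep, h1.2.1]
    · exact ih _ hL.tail hp

end Algebra

/-! ### Connectivity of regions of `Δ_3(n)` -/

section Connectivity

variable {n : ℕ} {XM : Fin 3 → (Fin 3 → ℕ) → Finset (Fin n)}

lemma sum3 (f : Fin 3 → ℕ) {i j k : Fin 3} (hij : i ≠ j) (hik : i ≠ k) (hjk : j ≠ k) :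
    ∑ t, f t = f i + f j + f k := by
  rw [Fin.sum_univ_three]
  fin_cases i <;> fin_cases j <;> fin_cases k <;> simp_all <;> omega

lemma eq_or3 {i j k : Fin 3} (hij : i ≠ j) (hik : i ≠ k) (hjk : j ≠ k) (t : Fin 3) :
    t = i ∨ t = j ∨ t = k := by
  omega

lemma forall3 {P : Fin 3 → Prop} {i j k : Fin 3} (hij : i ≠ j) (hik : i ≠ k) (hjk : j ≠ k)
    (h1 : P i) (h2 : P j) (h3 : P k) : ∀ t, P t := by
  intro t
  rcases eq_or3 hij hik hjk t with rfl | rfl | rfl <;> assumption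

/-- `c` belongs to `Δ_3(n)` and `X_i(c)` lies in the family `U i` for each color `i`. -/
def VV (XM : Fin 3 → (Fin 3 → ℕ) → Finset (Fin n)) (U : Fin 3 → Finset (Fin n) → Prop)
    (c : Fin 3 → ℕ) : Prop :=
  ∑ t, c t = n ∧ ∀ i, U i (XM i c)

/-- A step between two points of `VV XM U` whose sets are comparable in each color; linear syzygy
edges provide such steps. -/
def Stp (XM : Fin 3 → (Fin 3 → ℕ) → Finset (Fin n)) (U : Fin 3 → Finset (Fin n) → Prop)
    (a b : Fin 3 → ℕ) : Prop :=
  VV XM U a ∧ VV XM U b ∧ ∀ i, XM i a ⊆ XM i b ∨ XM i b ⊆ XM i a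

/-- The condition that of any two edges of a down-triangle one is a linear syzygy edge. -/
def Tri (XM : Fin 3 → (Fin 3 → ℕ) → Finset (Fin n)) : Prop :=
  ∀ c : Fin 3 → ℕ, ∑ t, c t = n + 1 → (∀ i, 1 ≤ c i) → ∀ i j k : Fin 3, i ≠ j → i ≠ k → j ≠ k →
    XM i (subE c j) = XM i (subE c k) ∨ XM j (subE c i) = XM j (subE c k)

/-- Moving a unit from coordinate `i` to coordinate `j`. -/
def mv (c : Fin 3 → ℕ) (i j : Fin 3) : Fin 3 → ℕ := subE (addE c j) i

lemma mv_src (c : Fin 3 → ℕ) {i j : Fin 3} (h : i ≠ j) : mv c i j i = c i - 1 := by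
  simp [mv, subE, addE, h]

lemma mv_dst (c : Fin 3 → ℕ) {i j : Fin 3} (h : i ≠ j) : mv c i j j = c j + 1 := by
  simp [mv, subE, addE, h.symm]

lemma mv_other (c : Fin 3 → ℕ) {i j k : Fin 3} (h : k ≠ i) (h' : k ≠ j) : mv c i j k = c k := by
  simp [mv, subE, addE, h, h']

lemma subE_addE (c : Fin 3 → ℕ) (i : Fin 3) : subE (addE c i) i = c := by
  funext t
  simp [subE, addE]

lemma sum_mv {c : Fin 3 → ℕ} {i j k : Fin 3} (hij : i ≠ j) (hik : i ≠ k) (hjk : j ≠ k)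
    (hc : ∑ t, c t = n) (h : 1 ≤ c i) : ∑ t, mv c i j t = n := by
  rw [sum3 _ hij hik hjk] at hc ⊢
  rw [mv_src c hij, mv_dst c hij, mv_other c hik.symm hjk.symm]
  omega

lemma stp_symm {U : Fin 3 → Finset (Fin n) → Prop} {a b : Fin 3 → ℕ} (h : Stp XM U a b) :
    Stp XM U b a :=
  ⟨h.2.1, h.1, fun i => (h.2.2 i).symm⟩

lemma iso3 (hiso : ∀ (i : Fin 3) (a b : Fin 3 → ℕ), (∑ t, a t) = n → (∑ t, b t) = n →
      a i ≤ b i → (∀ j, j ≠ i → b j ≤ a j) → XM i a ⊆ XM i b)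
    {i j k : Fin 3} (hij : i ≠ j) (hik : i ≠ k) (hjk : j ≠ k) {a b : Fin 3 → ℕ}
    (ha : ∑ t, a t = n) (hb : ∑ t, b t = n) (h1 : a i ≤ b i) (h2 : b j ≤ a j) (h3 : b k ≤ a k) :
    XM i a ⊆ XM i b := by
  refine hiso i a b ha hb h1 fun t ht => ?_
  rcases eq_or3 hij hik hjk t with rfl | rfl | rfl
  · exact absurd rfl ht
  · exact h2
  · exact h3

/-- The `ℓ¹`-distance on `Δ_3(n)`. -/
def dst (a b : Fin 3 → ℕ) : ℕ := ∑ t, ((a t - b t) + (b t - a t))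

lemma dst_comm (a b : Fin 3 → ℕ) : dst a b = dst b a := by
  unfold dst
  exact Finset.sum_congr rfl fun t _ => add_comm _ _

variable {U : Fin 3 → Finset (Fin n) → Prop}

/-- Comparable colors along an elementary move from `i` to `j` which fixes the set of color `k`. -/
lemma stp_mv (hiso : ∀ (i : Fin 3) (a b : Fin 3 → ℕ), (∑ t, a t) = n → (∑ t, b t) = n →
      a i ≤ b i → (∀ j, j ≠ i → b j ≤ a j) → XM i a ⊆ XM i b)
    {i j k : Fin 3} (hij : i ≠ j) (hik : i ≠ k) (hjk : j ≠ k) {a : Fin 3 → ℕ}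
    (ha : VV XM U a) (hb : VV XM U (mv a i j)) (h : XM k a = XM k (mv a i j)) :
    Stp XM U a (mv a i j) := by
  refine ⟨ha, hb, forall3 hij hik hjk (Or.inr ?_) (Or.inl ?_) (Or.inl h.le)⟩
  · apply iso3 hiso hij hik hjk hb.1 ha.1
    · rw [mv_src a hij]; omega
    · rw [mv_dst a hij]; omega
    · rw [mv_other a hik.symm hjk.symm]
  · apply iso3 hiso hij.symm hjk hik ha.1 hb.1
    · rw [mv_dst a hij]; omega
    · rw [mv_src a hij]; omega
    · rw [mv_other a hik.symm hjk.symm]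

/-- If two neighbours `a` and `mv a i j` in a row with constant coordinate `k` have different sets of
color `k`, then the third vertex `mv a k j` of the down-triangle shares its set of color `i` with `a`
and its set of color `j` with `mv a i j`. -/
lemma third_vertex (hrank : ∀ i b, (∑ t, b t) = n → (XM i b).card = b i)
    (htri : Tri XM) {i j k : Fin 3} (hij : i ≠ j) (hik : i ≠ k) (hjk : j ≠ k)
    {a : Fin 3 → ℕ} (ha : ∑ t, a t = n) (hi : 1 ≤ a i) (hne : XM k a ≠ XM k (mv a i j)) :
    1 ≤ a k ∧ XM i a = XM i (mv a k j) ∧ XM j (mv a i j) = XM j (mv a k j) := by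
  have hb := sum_mv hij hik hjk ha hi
  have hk : 1 ≤ a k := by
    by_contra h0
    apply hne
    have h1 := hrank k a ha
    have h2 := hrank k _ hb
    rw [mv_other a hik.symm hjk.symm] at h2
    have h3 : a k = 0 := by omega
    rw [h3, Finset.card_eq_zero] at h1 h2
    rw [h1, h2]
  have hc : ∑ t, addE a j t = n + 1 := by
    rw [sum3 _ hij hik hjk] at ha ⊢
    simp [addE, hij, hjk.symm]
    omega
  have hpos : ∀ t, 1 ≤ addE a j t := by
    refine forall3 hij hik hjk ?_ ?_ ?_ <;> simp [addE, hij, hjk.symm] <;> omega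
  refine ⟨hk, ?_, ?_⟩
  · rcases htri _ hc hpos i k j hik hij hjk.symm with h | h
    · rw [subE_addE] at h; exact h.symm
    · rw [subE_addE] at h; exact absurd h.symm hne
  · rcases htri _ hc hpos j k i hjk hij.symm hik.symm with h | h
    · exact h.symm
    · rw [subE_addE] at h; exact absurd h hne

/-- Two points of the same row (constant coordinate `k`) are connected, provided that closer
points are connected. -/
lemma conn_row (hrank : ∀ i b, (∑ t, b t) = n → (XM i b).card = b i)
    (hiso : ∀ (i : Fin 3) (a b : Fin 3 → ℕ), (∑ t, a t) = n → (∑ t, b t) = n →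
      a i ≤ b i → (∀ j, j ≠ i → b j ≤ a j) → XM i a ⊆ XM i b)
    (htri : Tri XM) (hU : ∀ i S T, S ⊆ T → U i T → U i S) {N : ℕ}
    (ih : ∀ a b, dst a b < N → VV XM U a → VV XM U b → Relation.ReflTransGen (Stp XM U) a b)
    {i j k : Fin 3} (hij : i ≠ j) (hik : i ≠ k) (hjk : j ≠ k) {l u : Fin 3 → ℕ}
    (hl : VV XM U l) (hu : VV XM U u) (hN : dst l u = N) (h1 : l j < u j) (h2 : u k = l k) :
    Relation.ReflTransGen (Stp XM U) l u := by
  have hls := hl.1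
  have hus := hu.1
  rw [sum3 _ hij hik hjk] at hls hus
  rw [dst, sum3 _ hij hik hjk] at hN
  -- the neighbours of `l` and of `u` in the row
  have hzs := sum_mv hij hik hjk hl.1 (show 1 ≤ l i by omega)
  have hz's := sum_mv hij.symm hjk hik hu.1 (show 1 ≤ u j by omega)
  have hzi : mv l i j i = l i - 1 := mv_src l hij
  have hzj : mv l i j j = l j + 1 := mv_dst l hij
  have hzk : mv l i j k = l k := mv_other l hik.symm hjk.symm
  have hzi' : mv u j i i = u i + 1 := mv_dst u hij.symm
  have hzj' : mv u j i j = u j - 1 := mv_src u hij.symm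
  have hzk' : mv u j i k = u k := mv_other u hjk.symm hik.symm
  have hzV : U k (XM k (mv l i j)) → VV XM U (mv l i j) := fun h => by
    refine ⟨hzs, forall3 hij hik hjk ?_ ?_ h⟩
    · exact hU _ _ _ (iso3 hiso hij hik hjk hzs hl.1 (by omega) (by omega) (by omega)) (hl.2 i)
    · exact hU _ _ _ (iso3 hiso hij.symm hjk hik hzs hu.1 (by omega) (by omega) (by omega)) (hu.2 j)
  have hzV' : U k (XM k (mv u j i)) → VV XM U (mv u j i) := fun h => by
    refine ⟨hz's, forall3 hij hik hjk ?_ ?_ h⟩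
    · exact hU _ _ _ (iso3 hiso hij hik hjk hz's hl.1 (by omega) (by omega) (by omega)) (hl.2 i)
    · exact hU _ _ _ (iso3 hiso hij.symm hjk hik hz's hu.1 (by omega) (by omega) (by omega))
        (hu.2 j)
  -- the third vertices of the down-triangles at both ends
  have hd : XM k l ≠ XM k (mv l i j) → 1 ≤ l k ∧ VV XM U (mv l k j) ∧ Stp XM U l (mv l k j) := by
    intro hne
    obtain ⟨hk, e1, e2⟩ := third_vertex hrank htri hij hik hjk hl.1 (by omega) hne
    have hds := sum_mv hjk.symm hik.symm hij.symm hl.1 hk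
    have hV : VV XM U (mv l k j) := by
      refine ⟨hds, forall3 hij hik hjk (e1 ▸ hl.2 i) ?_ ?_⟩
      · rw [← e2]
        exact hU _ _ _ (iso3 hiso hij.symm hjk hik hzs hu.1 (by omega) (by omega) (by omega))
          (hu.2 j)
      · refine hU _ _ _ (iso3 hiso hik.symm hjk.symm hij hds hl.1 ?_ ?_ ?_) (hl.2 k)
        · rw [mv_src l hjk.symm]; omega
        · rw [mv_other l hik hij]
        · rw [mv_dst l hjk.symm]; omega
    exact ⟨hk, hV, stp_mv hiso hjk.symm hik.symm hij.symm hl hV e1⟩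
  have hd' : XM k u ≠ XM k (mv u j i) → 1 ≤ u k ∧ VV XM U (mv u k i) ∧ Stp XM U u (mv u k i) := by
    intro hne
    obtain ⟨hk, e1, e2⟩ := third_vertex hrank htri hij.symm hjk hik hu.1 (by omega) hne
    have hds := sum_mv hik.symm hjk.symm hij hu.1 hk
    have hV : VV XM U (mv u k i) := by
      refine ⟨hds, forall3 hij hik hjk ?_ (e1 ▸ hu.2 j) ?_⟩
      · rw [← e2]
        exact hU _ _ _ (iso3 hiso hij hik hjk hz's hl.1 (by omega) (by omega) (by omega))
          (hl.2 i)
      · refine hU _ _ _ (iso3 hiso hjk.symm hik.symm hij.symm hds hu.1 ?_ ?_ ?_) (hu.2 k)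
        · rw [mv_src u hik.symm]; omega
        · rw [mv_other u hjk hij.symm]
        · rw [mv_dst u hik.symm]; omega
    exact ⟨hk, hV, stp_mv hiso hik.symm hjk.symm hij hu hV e1⟩
  by_cases hone : u j = l j + 1
  · -- neighbouring points
    have hul : mv l i j = u := by
      funext t
      revert t
      refine forall3 hij hik hjk ?_ ?_ ?_ <;> omega
    have hlu : mv l k j = mv u k i := by
      funext t
      revert t
      refine forall3 hij hik hjk ?_ ?_ ?_
      · rw [mv_other l hik hij, mv_dst u hik.symm]; omega
      · rw [mv_dst l hjk.symm, mv_other u hjk hij.symm]; omega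
      · rw [mv_src l hjk.symm, mv_src u hik.symm]; omega
    have hul' : mv u j i = l := by
      funext t
      revert t
      refine forall3 hij hik hjk ?_ ?_ ?_ <;> omega
    by_cases he : XM k l = XM k (mv l i j)
    · have := stp_mv hiso hij hik hjk hl (hul ▸ hu) he
      rw [hul] at this
      exact .single this
    · have s1 := (hd he).2.2
      have s2 := (hd' (by rw [hul'] ; rw [hul] at he; exact fun h => he h.symm)).2.2
      rw [← hlu] at s2
      exact (Relation.ReflTransGen.single s1).tail (stp_symm s2)
  · by_cases hz : U k (XM k (mv l i j))
    · refine (ih l _ ?_ hl (hzV hz)).trans (ih _ u ?_ (hzV hz) hu) <;>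
        (rw [dst, sum3 _ hij hik hjk]; omega)
    · by_cases hz' : U k (XM k (mv u j i))
      · refine (ih l _ ?_ hl (hzV' hz')).trans (ih _ u ?_ (hzV' hz') hu) <;>
          (rw [dst, sum3 _ hij hik hjk]; omega)
      · -- both neighbours leave the region, so the path passes through the next row
        obtain ⟨hk, hV, s1⟩ := hd fun h => hz (h ▸ hl.2 k)
        obtain ⟨-, hV', s2⟩ := hd' fun h => hz' (h ▸ hu.2 k)
        refine (Relation.ReflTransGen.single s1).trans (.tail (ih _ _ ?_ hV hV') (stp_symm s2))
        have e1 : mv l k j i = l i := mv_other l hik hij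
        have e2 : mv l k j j = l j + 1 := mv_dst l hjk.symm
        have e3 : mv l k j k = l k - 1 := mv_src l hjk.symm
        have e4 : mv u k i i = u i + 1 := mv_dst u hik.symm
        have e5 : mv u k i j = u j := mv_other u hjk hij.symm
        have e6 : mv u k i k = u k - 1 := mv_src u hik.symm
        rw [dst, sum3 _ hij hik hjk]
        omega

/-- Two points `l`, `u` of the region with `u ≥_i l` are connected, provided that closer points
are connected. -/
lemma conn_aux (hrank : ∀ i b, (∑ t, b t) = n → (XM i b).card = b i)
    (hiso : ∀ (i : Fin 3) (a b : Fin 3 → ℕ), (∑ t, a t) = n → (∑ t, b t) = n →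
      a i ≤ b i → (∀ j, j ≠ i → b j ≤ a j) → XM i a ⊆ XM i b)
    (htri : Tri XM) (hU : ∀ i S T, S ⊆ T → U i T → U i S) {N : ℕ}
    (ih : ∀ a b, dst a b < N → VV XM U a → VV XM U b → Relation.ReflTransGen (Stp XM U) a b)
    {i j k : Fin 3} (hij : i ≠ j) (hik : i ≠ k) (hjk : j ≠ k) {l u : Fin 3 → ℕ}
    (hl : VV XM U l) (hu : VV XM U u) (hN : dst l u = N) (h1 : l i < u i) (h2 : u j ≤ l j)
    (h3 : u k ≤ l k) : Relation.ReflTransGen (Stp XM U) l u := by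
  rcases h2.eq_or_lt with h2 | h2
  · exact conn_row hrank hiso htri hU ih hik.symm hjk.symm hij hl hu hN h1 h2
  rcases h3.eq_or_lt with h3 | h3
  · exact conn_row hrank hiso htri hU ih hij.symm hjk hik hl hu hN h1 h3
  -- a linear syzygy edge moves `l` towards `u`
  have key : ∀ j k : Fin 3, i ≠ j → i ≠ k → j ≠ k → u j < l j → u k < l k →
      XM k l = XM k (mv l j i) → Relation.ReflTransGen (Stp XM U) l u := by
    intro j k hij hik hjk h2 h3 he
    have hls := hl.1
    have hus := hu.1
    rw [sum3 _ hij hik hjk] at hls hus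
    rw [dst, sum3 _ hij hik hjk] at hN
    have hms := sum_mv hij.symm hjk hik hl.1 (show 1 ≤ l j by omega)
    have hmi : mv l j i i = l i + 1 := mv_dst l hij.symm
    have hmj : mv l j i j = l j - 1 := mv_src l hij.symm
    have hmk : mv l j i k = l k := mv_other l hjk.symm hik.symm
    have hV : VV XM U (mv l j i) := by
      refine ⟨hms, forall3 hij hik hjk ?_ ?_ (he ▸ hl.2 k)⟩
      · exact hU _ _ _ (iso3 hiso hij hik hjk hms hu.1 (by omega) (by omega) (by omega)) (hu.2 i)
      · exact hU _ _ _ (iso3 hiso hij.symm hjk hik hms hl.1 (by omega) (by omega) (by omega))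
          (hl.2 j)
    refine (Relation.ReflTransGen.single (stp_mv hiso hij.symm hjk hik hl hV he)).trans
      (ih _ _ ?_ hV hu)
    rw [dst, sum3 _ hij hik hjk]
    omega
  have hls := hl.1
  rw [sum3 _ hij hik hjk] at hls
  have hc : ∑ t, addE l i t = n + 1 := by
    rw [sum3 _ hij hik hjk]
    simp [addE, hij.symm, hik.symm]
    omega
  have hpos : ∀ t, 1 ≤ addE l i t := by
    refine forall3 hij hik hjk ?_ ?_ ?_ <;> simp [addE, hij.symm, hik.symm] <;> omega
  rcases htri _ hc hpos k j i hjk.symm hik.symm hij.symm with h | h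
  · rw [subE_addE] at h
    exact key j k hij hik hjk h2 h3 h.symm
  · rw [subE_addE] at h
    exact key k j hik hij hjk.symm h3 h2 h.symm

/-- Under the down-triangle condition, any region of `Δ_3(n)` cut out by lower families of sets in
the three colors is connected through steps with comparable sets. -/
theorem conn (hrank : ∀ i b, (∑ t, b t) = n → (XM i b).card = b i)
    (hiso : ∀ (i : Fin 3) (a b : Fin 3 → ℕ), (∑ t, a t) = n → (∑ t, b t) = n →
      a i ≤ b i → (∀ j, j ≠ i → b j ≤ a j) → XM i a ⊆ XM i b)
    (htri : Tri XM) (hU : ∀ i S T, S ⊆ T → U i T → U i S) (N : ℕ) :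
    ∀ a b, dst a b = N → VV XM U a → VV XM U b → Relation.ReflTransGen (Stp XM U) a b := by
  induction N using Nat.strong_induction_on with
  | _ N ih =>
    intro a b hN ha hb
    have ih' : ∀ a b, dst a b < N → VV XM U a → VV XM U b →
        Relation.ReflTransGen (Stp XM U) a b := fun a b h => ih _ h a b rfl
    by_cases hab : a = b
    · subst hab; exact .refl
    have has := ha.1
    have hbs := hb.1
    rw [Fin.sum_univ_three] at has hbs
    have hex : ∃ i j k : Fin 3, i ≠ j ∧ i ≠ k ∧ j ≠ k ∧
        ((a i < b i ∧ b j ≤ a j ∧ b k ≤ a k) ∨ (b i < a i ∧ a j ≤ b j ∧ a k ≤ b k)) := by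
      have hne : ¬ (a 0 = b 0 ∧ a 1 = b 1 ∧ a 2 = b 2) := by
        rintro ⟨e0, e1, e2⟩
        apply hab
        funext t
        fin_cases t <;> assumption
      have h3 : ((a 0 < b 0 ∧ b 1 ≤ a 1 ∧ b 2 ≤ a 2) ∨ (b 0 < a 0 ∧ a 1 ≤ b 1 ∧ a 2 ≤ b 2)) ∨
          ((a 1 < b 1 ∧ b 0 ≤ a 0 ∧ b 2 ≤ a 2) ∨ (b 1 < a 1 ∧ a 0 ≤ b 0 ∧ a 2 ≤ b 2)) ∨
          ((a 2 < b 2 ∧ b 0 ≤ a 0 ∧ b 1 ≤ a 1) ∨ (b 2 < a 2 ∧ a 0 ≤ b 0 ∧ a 1 ≤ b 1)) := by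
        omega
      rcases h3 with h | h | h
      · exact ⟨0, 1, 2, by decide, by decide, by decide, h⟩
      · exact ⟨1, 0, 2, by decide, by decide, by decide, h⟩
      · exact ⟨2, 0, 1, by decide, by decide, by decide, h⟩
    obtain ⟨i, j, k, hij, hik, hjk, ⟨h1, h2, h3⟩ | ⟨h1, h2, h3⟩⟩ := hex
    · exact conn_aux hrank hiso htri hU ih' hij hik hjk ha hb hN h1 h2 h3
    · have : Std.Symm (Stp XM U) := ⟨fun _ _ => stp_symm⟩
      exact symm_of (Relation.ReflTransGen (Stp XM U))
        (conn_aux hrank hiso htri hU ih' hij hik hjk hb ha (dst_comm a b ▸ hN) h1 h2 h3)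

end Connectivity

/-! ### Merged generators -/

section Merged

variable {n : ℕ} {XM : Fin 3 → (Fin 3 → ℕ) → Finset (Fin n)}

/-- The exponent of the squarefree monomial `∏ i, ∏ j ∈ S i, x_{ij}`. -/
def ex (S : Fin 3 → Finset (Fin n)) : (Fin 3 × Fin n) →₀ ℕ :=
  ∑ i, ∑ j ∈ S i, Finsupp.single (i, j) 1

/-- The number of variables `x_{ij}`, `j ∈ S`, which `h` sends to `v`. -/
def cnt (h : Fin 3 × Fin n → Fin 3 × Fin n) (i : Fin 3) (S : Finset (Fin n)) (v : Fin 3 × Fin n) :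
    ℕ :=
  (S.filter fun j => h (i, j) = v).card

/-- The exponents of the generators `m(b)`, `b ∈ Δ_3(n)`. -/
def EX (XM : Fin 3 → (Fin 3 → ℕ) → Finset (Fin n)) (b : {b : Fin 3 → ℕ // ∑ t, b t = n}) :
    (Fin 3 × Fin n) →₀ ℕ :=
  ex fun i => XM i b

variable {h : Fin 3 × Fin n → Fin 3 × Fin n}

lemma cnt_mono {i : Fin 3} {S T : Finset (Fin n)} (hST : S ⊆ T) (v : Fin 3 × Fin n) :
    cnt h i S v ≤ cnt h i T v :=
  Finset.card_le_card (Finset.filter_subset_filter _ hST)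

lemma mapDomain_ex (hc : ∀ v, (h v).1 = v.1) (S : Fin 3 → Finset (Fin n)) (v : Fin 3 × Fin n) :
    (ex S).mapDomain h v = cnt h v.1 (S v.1) v := by
  simp only [ex, Finsupp.mapDomain_finsetSum, Finsupp.mapDomain_single, Finsupp.finsetSum_apply,
    Finsupp.single_apply]
  rw [Finset.sum_eq_single v.1]
  · simp [cnt]
  · intro i _ hi
    apply Finset.sum_eq_zero
    intro j _
    rw [if_neg]
    intro hh
    apply hi
    rw [← hh, hc]
  · simp

lemma ex_apply (S : Fin 3 → Finset (Fin n)) (v : Fin 3 × Fin n) :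
    ex S v = if v.2 ∈ S v.1 then 1 else 0 := by
  obtain ⟨i, j⟩ := v
  have := mapDomain_ex (h := id) (fun _ => rfl) S (i, j)
  rw [Finsupp.mapDomain_id] at this
  rw [this, cnt]
  simp [Finset.filter_eq']
  split_ifs <;> simp

lemma EX_le_one (b : {b : Fin 3 → ℕ // ∑ t, b t = n}) (v : Fin 3 × Fin n) : EX XM b v ≤ 1 := by
  rw [EX, ex_apply]
  split_ifs <;> omega

lemma monB_eq (k : Type*) [Field k] (b : Fin 3 → ℕ) :
    monB k XM b = monomial (ex fun i => XM i b) 1 := by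
  simp only [monB, ex, monomial_sum_one, X]

/-! ### Sufficiency of the down-triangle condition -/

/-- The down-triangle condition implies the combinatorial regularity condition at every stage. -/
lemma CC_of_tri (hrank : ∀ i b, (∑ t, b t) = n → (XM i b).card = b i)
    (hiso : ∀ (i : Fin 3) (a b : Fin 3 → ℕ), (∑ t, a t) = n → (∑ t, b t) = n →
      a i ≤ b i → (∀ j, j ≠ i → b j ≤ a j) → XM i a ⊆ XM i b) (htri : Tri XM)
    (hc : ∀ v, (h v).1 = v.1) (p : (Fin 3 × Fin n) × (Fin 3 × Fin n)) (hp : p.1 ≠ p.2)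
    (hcol : p.1.1 = p.2.1) (hf : Fresh h p.2) : CC (EX XM) h p := by
  obtain ⟨s, y⟩ := p
  rintro w ⟨a, ha⟩ ⟨b, hb⟩
  simp only at hp hcol hf ha hb ⊢
  by_contra hn
  set x := h s with hx
  have hxy : x ≠ y := fun hh => hp (hf.2 _ hh)
  have hxc : x.1 = y.1 := by rw [hx, hc, hcol]
  generalize w.mapDomain h = w at *
  have hle1 : ∀ c : {b : Fin 3 → ℕ // ∑ t, b t = n}, cnt h y.1 (XM y.1 c) y ≤ 1 := by
    intro c
    have := EX_le_one (XM := XM) c y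
    rw [← hf.mapDomain_apply, EX, mapDomain_ex hc] at this
    exact this
  have hle : ∀ (c : {b : Fin 3 → ℕ // ∑ t, b t = n}) (w' : Fin 3 × Fin n →₀ ℕ),
      (EX XM c).mapDomain h ≤ w' ↔ ∀ v, cnt h v.1 (XM v.1 c) v ≤ w' v := by
    intro c w'
    rw [Finsupp.le_def]
    simp only [EX, mapDomain_ex hc]
  rw [hle] at ha hb
  have ha' : ∀ v, v ≠ x → cnt h v.1 (XM v.1 a) v ≤ w v := by
    intro v hv
    simpa [Finsupp.single_apply, Ne.symm hv] using ha v
  have hb' : ∀ v, v ≠ y → cnt h v.1 (XM v.1 b) v ≤ w v := by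
    intro v hv
    simpa [Finsupp.single_apply, Ne.symm hv] using hb v
  have hax := ha x
  have hby := hb y
  simp only [Finsupp.add_apply, Finsupp.single_eq_same] at hax hby
  have hwy : w y = 0 := by
    by_contra h0
    refine hn ⟨b, (hle b w).2 fun v => ?_⟩
    by_cases hv : v = y
    · subst hv
      have := hle1 b
      omega
    · exact hb' v hv
  -- the region where the degree of `x y` is at most one more than in `w`
  let U : Fin 3 → Finset (Fin n) → Prop := fun i S =>
    (∀ v : Fin 3 × Fin n, v.1 = i → v ≠ x → v ≠ y → cnt h i S v ≤ w v) ∧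
      (y.1 = i → cnt h i S x + cnt h i S y ≤ w x + 1)
  have hU : ∀ i S T, S ⊆ T → U i T → U i S := by
    rintro i S T hST ⟨h1, h2⟩
    refine ⟨fun v hv hvx hvy => (cnt_mono hST v).trans (h1 v hv hvx hvy), fun hi => ?_⟩
    exact (add_le_add (cnt_mono hST x) (cnt_mono hST y)).trans (h2 hi)
  have hVa : VV XM U a := by
    refine ⟨a.2, fun i => ⟨?_, ?_⟩⟩
    · rintro v rfl h1 h2
      exact ha' v h1
    · rintro rfl
      have := ha' y hxy.symm
      rw [hxc] at hax
      omega
  have hVb : VV XM U b := by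
    refine ⟨b.2, fun i => ⟨?_, ?_⟩⟩
    · rintro v rfl h1 h2
      exact hb' v h2
    · rintro rfl
      have := hb' x hxy
      rw [hxc] at this
      omega
  -- in the region, the absence of `y` forces maximal degree in `x`, as `w` is not in the ideal
  have hmax : ∀ c, VV XM U c → cnt h y.1 (XM y.1 c) y = 0 →
      w x + 1 ≤ cnt h y.1 (XM y.1 c) x := by
    intro c hV h0
    by_contra hlt
    refine hn ⟨⟨c, hV.1⟩, (hle _ w).2 fun v => ?_⟩
    by_cases hvx : v = x
    · subst hvx
      rw [hxc]
      simp only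
      omega
    · by_cases hvy : v = y
      · subst hvy
        simp only
        omega
      · exact (hV.2 v.1).1 v rfl hvx hvy
  have hpath := conn hrank hiso htri hU _ a b rfl hVa hVb
  have hfin : cnt h y.1 (XM y.1 b) y = 0 := by
    clear hby hb hb' hVb
    generalize b.1 = b at hpath
    induction hpath with
    | refl => have := ha' y hxy.symm; omega
    | @tail c d _ hstep ih =>
      obtain ⟨hVc, hVd, hcomp⟩ := hstep
      rcases hcomp y.1 with hs | hs
      · have h1 := hmax c hVc ih
        have h2 := cnt_mono (h := h) (i := y.1) hs x
        have h3 := (hVd.2 y.1).2 rfl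
        omega
      · have := cnt_mono (h := h) (i := y.1) hs y
        omega
  have h1 := hmax b hVb hfin
  have h2 := hb' x hxy
  rw [hxc] at h2
  omega

lemma mstep_color (hc : ∀ v, (h v).1 = v.1) {p : (Fin 3 × Fin n) × (Fin 3 × Fin n)}
    (hcol : p.1.1 = p.2.1) (v : Fin 3 × Fin n) : (mstep h p v).1 = v.1 := by
  unfold mstep
  split_ifs with h1
  · rw [hc, hcol, ← h1, hc]
  · exact hc v

lemma CSeq_of_tri (hrank : ∀ i b, (∑ t, b t) = n → (XM i b).card = b i)
    (hiso : ∀ (i : Fin 3) (a b : Fin 3 → ℕ), (∑ t, a t) = n → (∑ t, b t) = n →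
      a i ≤ b i → (∀ j, j ≠ i → b j ≤ a j) → XM i a ⊆ XM i b) (htri : Tri XM)
    (L : List ((Fin 3 × Fin n) × (Fin 3 × Fin n))) (h : Fin 3 × Fin n → Fin 3 × Fin n)
    (hc : ∀ v, (h v).1 = v.1) (hL : GoodL L h) (hcol : ∀ p ∈ L, p.1.1 = p.2.1) :
    CSeq (EX XM) L h := by
  induction L generalizing h with
  | nil => trivial
  | cons p L ih =>
    have h1 := hL.1 p List.mem_cons_self
    have h2 := hcol p List.mem_cons_self
    exact ⟨CC_of_tri hrank hiso htri hc p h1.1 h2 h1.2,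
      ih _ (mstep_color hc h2) hL.tail fun q hq => hcol q (List.mem_cons_of_mem _ hq)⟩

/-! ### Necessity of the down-triangle condition -/

/-- The monomials of color `i` with index sets `S` and `T` agree after merging along `h`. -/
def EqH (h : Fin 3 × Fin n → Fin 3 × Fin n) (i : Fin 3) (S T : Finset (Fin n)) : Prop :=
  ∀ x : Fin n, cnt h i S (i, x) = cnt h i T (i, x)

lemma cnt_insert {i : Fin 3} {A : Finset (Fin n)} {p : Fin n} (hp : p ∉ A) (v : Fin 3 × Fin n) :
    cnt h i (insert p A) v = cnt h i A v + if h (i, p) = v then 1 else 0 := by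
  unfold cnt
  rw [Finset.filter_insert]
  split_ifs with h1
  · rw [Finset.card_insert_of_notMem (by simp [hp])]
  · rfl

lemma sum_cnt (hc : ∀ v, (h v).1 = v.1) (i : Fin 3) (S : Finset (Fin n)) :
    ∑ x, cnt h i S (i, x) = S.card := by
  rw [Finset.card_eq_sum_card_fiberwise (f := fun j => (h (i, j)).2) (t := Finset.univ)
    (fun _ _ => by simp)]
  refine Finset.sum_congr rfl fun x _ => ?_
  unfold cnt
  congr 1
  apply Finset.filter_congr
  intro j _
  rw [Prod.ext_iff]
  simp [hc]

lemma subE_self (c : Fin 3 → ℕ) (i : Fin 3) : subE c i i = c i - 1 := by simp [subE]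

lemma subE_ne (c : Fin 3 → ℕ) {i j : Fin 3} (h : j ≠ i) : subE c i j = c j := by simp [subE, h]

lemma sum_subE {c : Fin 3 → ℕ} {i j k : Fin 3} (hij : i ≠ j) (hik : i ≠ k) (hjk : j ≠ k)
    (hc : ∑ t, c t = n + 1) (hi : 1 ≤ c i) : ∑ t, subE c i t = n := by
  rw [sum3 _ hij hik hjk] at hc ⊢
  rw [subE_self, subE_ne c hij.symm, subE_ne c hik.symm]
  omega

/-- If merging one more pair makes the two color-`i` monomials opposite to the vertex `c - e_i` of a
down-triangle equal, then the other two edges already were linear syzygy edges: otherwise the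
monomial with color-`i` part that of `c - e_i`, color-`j` part that of `c - e_k` and color-`k` part
that of `c - e_j` would violate `CC`. -/
lemma edge_of_CC (hrank : ∀ i b, (∑ t, b t) = n → (XM i b).card = b i)
    (hiso : ∀ (i : Fin 3) (a b : Fin 3 → ℕ), (∑ t, a t) = n → (∑ t, b t) = n →
      a i ≤ b i → (∀ j, j ≠ i → b j ≤ a j) → XM i a ⊆ XM i b)
    (hc : ∀ v, (h v).1 = v.1) (P : (Fin 3 × Fin n) × (Fin 3 × Fin n)) (hcol : P.1.1 = P.2.1)
    (hCC : CC (EX XM) h P)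
    {c : Fin 3 → ℕ} (hcs : ∑ t, c t = n + 1) (hpos : ∀ t, 1 ≤ c t)
    {i j k : Fin 3} (hij : i ≠ j) (hik : i ≠ k) (hjk : j ≠ k)
    (h1 : EqH (mstep h P) i (XM i (subE c j)) (XM i (subE c k)))
    (h2 : ¬ EqH h i (XM i (subE c j)) (XM i (subE c k))) :
    EqH h j (XM j (subE c i)) (XM j (subE c k)) := by
  have si := sum_subE hij hik hjk hcs (hpos i)
  have sj := sum_subE hij.symm hjk hik hcs (hpos j)
  have sk := sum_subE hik.symm hjk.symm hij hcs (hpos k)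
  have hsum := hcs
  rw [sum3 _ hij hik hjk] at hsum
  have hposi := hpos i
  -- inclusions between the sets of the three vertices
  have inc : ∀ {p q r : Fin 3}, p ≠ q → p ≠ r → q ≠ r → XM p (subE c p) ⊆ XM p (subE c q) := by
    intro p q r hpq hpr hqr
    apply iso3 hiso hpq hpr hqr (sum_subE hpq hpr hqr hcs (hpos p))
      (sum_subE hpq.symm hqr hpr hcs (hpos q))
    · rw [subE_self, subE_ne c hpq]; omega
    · rw [subE_self, subE_ne c hpq.symm]; omega
    · rw [subE_ne c hpr.symm, subE_ne c hqr.symm]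
  have hcard : ∀ {p q : Fin 3}, p ≠ q → ∑ t, subE c p t = n → ∑ t, subE c q t = n →
      (XM p (subE c p)).card + 1 = (XM p (subE c q)).card := by
    intro p q hpq e1 e2
    rw [hrank _ _ e1, hrank _ _ e2, subE_self, subE_ne c hpq]
    have := hpos p
    omega
  obtain ⟨p, hpA, hpS⟩ := Finset.exists_eq_insert_iff.2 ⟨inc hij hik hjk, hcard hij si sj⟩
  obtain ⟨q, hqA, hqS⟩ := Finset.exists_eq_insert_iff.2 ⟨inc hik hij hjk.symm, hcard hik si sk⟩
  set A := XM i (subE c i) with hA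
  have hne : h (i, p) ≠ h (i, q) := by
    intro hh
    apply h2
    intro x
    rw [← hpS, ← hqS, cnt_insert hpA, cnt_insert hqA, hh]
  have heq : mstep h P (i, p) = mstep h P (i, q) := by
    have hv : (mstep h P (i, p)).1 = i := mstep_color hc hcol _
    have := h1 (mstep h P (i, p)).2
    rw [← hpS, ← hqS, cnt_insert hpA, cnt_insert hqA,
      show (i, (mstep h P (i, p)).2) = mstep h P (i, p) from Prod.ext hv.symm rfl] at this
    by_contra hh
    rw [if_pos rfl, if_neg (fun e => hh e.symm)] at this
    omega
  let W : Fin 3 → Finset (Fin n) := fun t =>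
    if t = i then A else if t = j then XM j (subE c k) else XM k (subE c j)
  have hWi : W i = A := by simp [W]
  have hWj : W j = XM j (subE c k) := by simp [W, hij.symm]
  have hWk : W k = XM k (subE c j) := by simp [W, hik.symm, hjk.symm]
  have H1 : InI (EX XM) h ((ex W).mapDomain h + Finsupp.single (h (i, p)) 1) := by
    refine ⟨⟨_, sj⟩, fun v => ?_⟩
    rw [Finsupp.add_apply, EX, mapDomain_ex hc, mapDomain_ex hc]
    obtain ⟨t, x⟩ := v
    simp only
    revert t
    refine forall3 hij hik hjk ?_ ?_ ?_
    · rw [hWi, ← hpS, cnt_insert hpA, Finsupp.single_apply]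
    · rw [hWj]
      exact (cnt_mono (inc hjk hij.symm hik.symm) _).trans (Nat.le_add_right _ _)
    · rw [hWk]
      exact Nat.le_add_right _ _
  have H2 : InI (EX XM) h ((ex W).mapDomain h + Finsupp.single (h (i, q)) 1) := by
    refine ⟨⟨_, sk⟩, fun v => ?_⟩
    rw [Finsupp.add_apply, EX, mapDomain_ex hc, mapDomain_ex hc]
    obtain ⟨t, x⟩ := v
    simp only
    revert t
    refine forall3 hij hik hjk ?_ ?_ ?_
    · rw [hWi, ← hqS, cnt_insert hqA, Finsupp.single_apply]
    · rw [hWj]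
      exact Nat.le_add_right _ _
    · rw [hWk]
      exact (cnt_mono (inc hjk.symm hik.symm hij.symm) _).trans (Nat.le_add_right _ _)
  have H3 : InI (EX XM) h ((ex W).mapDomain h) := by
    unfold mstep at heq
    split_ifs at heq with e1 e2 e2
    · exact absurd (e1.trans e2.symm) hne
    · exact hCC _ (heq ▸ H2) (e1 ▸ H1)
    · exact hCC _ (heq ▸ H1) (e2 ▸ H2)
    · exact absurd heq hne
  obtain ⟨⟨d, hd⟩, hle⟩ := H3
  have hle' : ∀ t x, cnt h t (XM t d) (t, x) ≤ cnt h t (W t) (t, x) := by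
    intro t x
    have := hle (t, x)
    rwa [EX, mapDomain_ex hc, mapDomain_ex hc] at this
  have hcd : ∀ t, d t ≤ (W t).card := by
    intro t
    rw [← hrank t d hd, ← sum_cnt hc t, ← sum_cnt hc t (W t)]
    exact Finset.sum_le_sum fun x _ => hle' t x
  have ci := hcd i
  have cj := hcd j
  have ck := hcd k
  have hds := hd
  rw [sum3 _ hij hik hjk] at hds
  rw [hWi, hA, hrank _ _ si, subE_self] at ci
  rw [hWj, hrank _ _ sk, subE_ne c hjk] at cj
  rw [hWk, hrank _ _ sj, subE_ne c hjk.symm] at ck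
  have hdc : d = subE c i := by
    funext t
    revert t
    refine forall3 hij hik hjk ?_ ?_ ?_
    · rw [subE_self]; omega
    · rw [subE_ne c hij.symm]; omega
    · rw [subE_ne c hik.symm]; omega
  subst hdc
  intro x
  have hsumeq : ∑ x, cnt h j (XM j (subE c i)) (j, x) = ∑ x, cnt h j (W j) (j, x) := by
    rw [sum_cnt hc, sum_cnt hc, hWj, hrank _ _ hd, hrank _ _ sk, subE_ne c hij.symm,
      subE_ne c hjk]
  have := (Finset.sum_eq_sum_iff_of_le fun x _ => hle' j x).1 hsumeq x (Finset.mem_univ x)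
  rw [this, hWj]

/-- Of any two edges of the down-triangle of `c`, one is a linear syzygy edge after merging
along `h`. -/
def TriAt (XM : Fin 3 → (Fin 3 → ℕ) → Finset (Fin n)) (h : Fin 3 × Fin n → Fin 3 × Fin n)
    (c : Fin 3 → ℕ) : Prop :=
  ∀ i j k : Fin 3, i ≠ j → i ≠ k → j ≠ k →
    EqH h i (XM i (subE c j)) (XM i (subE c k)) ∨ EqH h j (XM j (subE c i)) (XM j (subE c k))

/-- Descent along the merging process: if at most one edge of a down-triangle fails to be a linear
syzygy edge after all merges, then this already holds before them, since by `edge_of_CC` no merge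
can repair one of two failing edges. -/
lemma triAt_of_CSeq (hrank : ∀ i b, (∑ t, b t) = n → (XM i b).card = b i)
    (hiso : ∀ (i : Fin 3) (a b : Fin 3 → ℕ), (∑ t, a t) = n → (∑ t, b t) = n →
      a i ≤ b i → (∀ j, j ≠ i → b j ≤ a j) → XM i a ⊆ XM i b)
    {c : Fin 3 → ℕ} (hcs : ∑ t, c t = n + 1) (hpos : ∀ t, 1 ≤ c t)
    (L : List ((Fin 3 × Fin n) × (Fin 3 × Fin n))) (h : Fin 3 × Fin n → Fin 3 × Fin n)
    (hc : ∀ v, (h v).1 = v.1) (hcol : ∀ p ∈ L, p.1.1 = p.2.1)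
    (hC : CSeq (EX XM) L h) (hend : TriAt XM (mfold L h) c) : TriAt XM h c := by
  induction L generalizing h with
  | nil => exact hend
  | cons p L ih =>
    have h2 := hcol p List.mem_cons_self
    have := ih _ (mstep_color hc h2) (fun q hq => hcol q (List.mem_cons_of_mem _ hq)) hC.2 hend
    intro i j k hij hik hjk
    by_contra! hcon
    rcases this i j k hij hik hjk with h1 | h1
    · exact hcon.2 (edge_of_CC hrank hiso hc p h2 hC.1 hcs hpos hij hik hjk h1 hcon.1)
    · exact hcon.1 (edge_of_CC hrank hiso hc p h2 hC.1 hcs hpos hij.symm hjk hik h1 hcon.2)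

lemma eqH_id {i : Fin 3} {S T : Finset (Fin n)} (hST : EqH id i S T) : S = T := by
  ext x
  have := hST x
  simp [cnt, Finset.filter_eq'] at this
  by_cases h1 : x ∈ S <;> by_cases h2 : x ∈ T <;> simp_all

lemma eqH_const {i : Fin 3} (hconst : ∀ x y, h (i, x) = h (i, y)) {S T : Finset (Fin n)}
    (hcard : S.card = T.card) : EqH h i S T := by
  intro x
  unfold cnt
  by_cases hx : ∃ y, h (i, y) = (i, x)
  · obtain ⟨y, hy⟩ := hx
    have : ∀ z, h (i, z) = (i, x) := fun z => (hconst z y).trans hy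
    simp [this, hcard]
  · push Not at hx
    simp [hx]

end Merged

/-! ### The sequence of differences and the reduction to combinatorics -/

section Final

variable {n : ℕ} {XM : Fin 3 → (Fin 3 → ℕ) → Finset (Fin n)}

/-- The pairs of variables whose differences form the sequence `diffs`. -/
def prs (n : ℕ) : List ((Fin 3 × Fin n) × (Fin 3 × Fin n)) :=
  (List.finRange 3).flatMap fun i =>
    (List.finRange (n - 1)).map fun j =>
      ((i, ⟨j.1, by have := j.isLt; omega⟩), (i, ⟨j.1 + 1, by have := j.isLt; omega⟩))

lemma diffs_eq (k : Type*) [Field k] :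
    diffs k 3 n = (prs n).map fun p => (X p.1 - X p.2 : MvPolynomial (Fin 3 × Fin n) k) := by
  simp only [diffs, prs, List.map_flatMap, List.map_map]
  rfl

lemma mem_prs {p : (Fin 3 × Fin n) × (Fin 3 × Fin n)} :
    p ∈ prs n ↔ p.1.1 = p.2.1 ∧ p.1.2.1 + 1 = p.2.2.1 := by
  obtain ⟨⟨i, a⟩, ⟨j, b⟩⟩ := p
  simp only [prs, List.mem_flatMap, List.mem_map, List.mem_finRange, true_and, Prod.mk.injEq]
  constructor
  · rintro ⟨t, x, ⟨rfl, rfl⟩, rfl, rfl⟩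
    exact ⟨rfl, rfl⟩
  · rintro ⟨rfl, hb⟩
    refine ⟨i, ⟨a.1, by omega⟩, ⟨rfl, rfl⟩, rfl, ?_⟩
    ext
    exact hb

lemma goodL_prs : GoodL (prs n) id := by
  refine ⟨fun p hp => ⟨?_, rfl, fun v hv => hv⟩, ?_⟩
  · rw [mem_prs] at hp
    intro hh
    rw [hh] at hp
    omega
  · rw [prs, List.pairwise_flatMap]
    constructor
    · intro i _
      rw [List.pairwise_map]
      refine (List.pairwise_lt_finRange _).imp ?_
      intro a b hab
      have hab' : a.1 < b.1 := hab
      simp only [ne_eq, Prod.mk.injEq, Fin.mk.injEq, true_and]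
      omega
    · refine (List.pairwise_lt_finRange _).imp ?_
      intro i j hij p hp q hq
      simp only [List.mem_map] at hp hq
      obtain ⟨a, -, rfl⟩ := hp
      obtain ⟨b, -, rfl⟩ := hq
      simp [hij.ne']

lemma mfold_const (i : Fin 3) (x y : Fin n) : mfold (prs n) id (i, x) = mfold (prs n) id (i, y) := by
  have key : ∀ (m : ℕ) (hm : m < n),
      mfold (prs n) id (i, ⟨m, hm⟩) = mfold (prs n) id (i, ⟨0, by omega⟩) := by
    intro m
    induction m with
    | zero => intro _; rfl
    | succ m ih =>
      intro hm
      rw [← ih (by omega)]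
      exact (mfold_pair (prs n) id goodL_prs
        (p := ((i, ⟨m, by omega⟩), (i, ⟨m + 1, hm⟩))) (mem_prs.2 ⟨rfl, rfl⟩)).symm
  rw [key x.1 x.2, key y.1 y.2]

lemma JofX_eq_span (k : Type*) [Field k] :
    JofX k XM = Ideal.span ((fun d => monomial d (1 : k)) '' Set.range (EX XM)) := by
  unfold JofX
  congr 1
  ext p
  constructor
  · rintro ⟨b, hb, rfl⟩
    exact ⟨_, ⟨⟨b, hb⟩, rfl⟩, (monB_eq k b).symm⟩
  · rintro ⟨_, ⟨⟨b, hb⟩, rfl⟩, rfl⟩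
    exact ⟨b, hb, (monB_eq k b).symm⟩

lemma JofX_eq (k : Type*) [Field k] : JofX k XM = JJ k (EX XM) id := by
  ext p
  rw [mem_JJ, JofX_eq_span, mem_ideal_span_monomial_image]
  simp [InI, Finsupp.mapDomain_id]

lemma map_JofX (k : Type*) [Field k] (hrank : ∀ i b, (∑ t, b t) = n → (XM i b).card = b i) :
    Ideal.map (rename Prod.fst : MvPolynomial (Fin 3 × Fin n) k →ₐ[k] MvPolynomial (Fin 3) k)
      (JofX k XM) = Ideal.span (Set.range MvPolynomial.X) ^ n := by
  have hb : ∀ b : Fin 3 → ℕ, ∑ t, b t = n →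
      rename Prod.fst (monB k XM b) = monomial (Finsupp.equivFunOnFinite.symm b) (1 : k) := by
    intro b hb
    rw [monomial_eq, Finsupp.prod_fintype _ _ (by simp)]
    simp [monB, map_prod, hrank _ _ hb]
  rw [show (Ideal.span (Set.range X) : Ideal (MvPolynomial (Fin 3) k)) = idealOfVars (Fin 3) k
    from rfl, pow_idealOfVars_eq_span, JofX, Ideal.map_span]
  congr 1
  ext p
  constructor
  · rintro ⟨_, ⟨b, hs, rfl⟩, rfl⟩
    refine ⟨Finsupp.equivFunOnFinite.symm b, ?_, (hb b hs).symm⟩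
    simpa [Finsupp.degree_eq_sum] using hs
  · rintro ⟨d, hd, rfl⟩
    have hs : ∑ t, d t = n := by simpa [Finsupp.degree_eq_sum] using hd
    refine ⟨_, ⟨d, hs, rfl⟩, ?_⟩
    refine (hb d hs).trans ?_
    congr 1
    ext
    simp

lemma polarization_iff (k : Type*) [Field k]
    (hrank : ∀ i b, (∑ t, b t) = n → (XM i b).card = b i) :
    IsPolarizationMaxPow k (JofX k XM) ↔ CSeq (EX XM) (prs n) id := by
  rw [← isRegSeq_iff (k := k) EX_le_one (prs n) id (fun _ => rfl) goodL_prs, ← diffs_eq, ← JofX_eq]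
  refine ⟨fun hh => hh.2.2, fun hh => ⟨⟨Set.range (EX XM), ?_, JofX_eq_span k⟩,
    map_JofX k hrank, hh⟩⟩
  rintro _ ⟨b, rfl⟩ x
  exact EX_le_one b x

lemma tri_iff : Tri XM ↔ ∀ c : Fin 3 → ℕ, (∑ t, c t) = n + 1 → (∀ i, 1 ≤ c i) →
        ((LSedge XM c 0 1 ∧ LSedge XM c 0 2) ∨
         (LSedge XM c 0 1 ∧ LSedge XM c 1 2) ∨
         (LSedge XM c 0 2 ∧ LSedge XM c 1 2)) := by
  unfold Tri
  refine forall_congr' fun c => forall_congr' fun hs => forall_congr' fun hpos => ?_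
  have hLS : ∀ i j k : Fin 3, i ≠ j → i ≠ k → j ≠ k →
      (LSedge XM c i j ↔ XM k (subE c i) = XM k (subE c j)) := by
    intro i j k hij hik hjk
    refine ⟨fun hh => hh k (hpos k) hik.symm hjk.symm, fun hh p _ h1 h2 => ?_⟩
    rcases eq_or3 hij hik hjk p with rfl | rfl | rfl
    · exact absurd rfl h1
    · exact absurd rfl h2
    · exact hh
  rw [hLS 0 1 2 (by decide) (by decide) (by decide), hLS 0 2 1 (by decide) (by decide) (by decide),
    hLS 1 2 0 (by decide) (by decide) (by decide)]
  constructor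
  · intro hh
    have h01 := hh 0 1 2 (by decide) (by decide) (by decide)
    have h02 := hh 0 2 1 (by decide) (by decide) (by decide)
    have h12 := hh 1 2 0 (by decide) (by decide) (by decide)
    rw [eq_comm (a := XM 0 (subE c 2))] at h02
    rw [eq_comm (a := XM 1 (subE c 2)), eq_comm (a := XM 2 (subE c 1))] at h12
    tauto
  · intro hh i j k hij hik hjk
    fin_cases i <;> fin_cases j <;> fin_cases k <;>
      first
        | exact absurd rfl hij
        | exact absurd rfl hik
        | exact absurd rfl hjk
        | grind

end Final

/-- For `m = 3`, the rank-preserving isotone maps `X_1, X_2, X_3` determine a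
polarization of `(x_1, x_2, x_3)^n` if and only if for every `c ∈ Δ_3(n+1)` with support of
cardinality `3` (i.e., every down-triangle `D(c)`), at most one of the three edges of `D(c)`
fails to be a linear syzygy edge, i.e. at least two of the three edges are linear syzygy
edges. -/
theorem stmt_5 {k : Type*} [Field k] (n : ℕ)
    (XM : Fin 3 → (Fin 3 → ℕ) → Finset (Fin n))
    (hrank : ∀ i b, (∑ t, b t) = n → (XM i b).card = b i)
    (hiso : ∀ (i : Fin 3) (a b : Fin 3 → ℕ), (∑ t, a t) = n → (∑ t, b t) = n →
      a i ≤ b i → (∀ j, j ≠ i → b j ≤ a j) → XM i a ⊆ XM i b) :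
    IsPolarizationMaxPow k (JofX k XM) ↔
      ∀ c : Fin 3 → ℕ, (∑ t, c t) = n + 1 → (∀ i, 1 ≤ c i) →
        ((LSedge XM c 0 1 ∧ LSedge XM c 0 2) ∨
         (LSedge XM c 0 1 ∧ LSedge XM c 1 2) ∨
         (LSedge XM c 0 2 ∧ LSedge XM c 1 2)) := by
  rw [polarization_iff k hrank, ← tri_iff]
  constructor
  · intro hC c hcs hpos i j k hij hik hjk
    have hend : TriAt XM (mfold (prs n) id) c := by
      intro i j k hij hik hjk
      left
      apply eqH_const (mfold_const i)
      rw [hrank _ _ (sum_subE hij.symm hjk hik hcs (hpos j)),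
        hrank _ _ (sum_subE hik.symm hjk.symm hij hcs (hpos k)), subE_ne c hij, subE_ne c hik]
    have := triAt_of_CSeq hrank hiso hcs hpos (prs n) id (fun _ => rfl)
      (fun p hp => (mem_prs.1 hp).1) hC hend
    exact (this i j k hij hik hjk).imp eqH_id eqH_id
  · intro htri
    exact CSeq_of_tri hrank hiso htri (prs n) id (fun _ => rfl) goodL_prs
      fun p hp => (mem_prs.1 hp).1
end
end
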